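/- Weighted landscape stability: let M, N be n-parameter persistence modules, let w ∈ ℝ^n with w_i > 0 and ‖w‖_∞ = 1, and let ω, ω^w be the sublinear projections ω_Γ = ‖Γ − id‖_∞ and ω^w_Γ = ‖Γ − id‖_∞^w. Then sup_{k,x} |λ_w(M)(k,x) − λ_w(N)(k,x)| ≤ d^{ω^w}(M,N) ≤ d^ω(M,N). -/

import Mathlib

open scoped ENNReal NNReal BigOperators

universe u v w

/-- A persistence module over a preorder `P` with coefficients in a field `𝕜`:
a functor from the poset `P` to the category of `𝕜`-vector spaces. -/
structure PersistenceModule (P : Type u) [Preorder P] (𝕜 : Type v) [Field 𝕜] where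
  obj : P → Type w
  [isAddCommGroup : ∀ a, AddCommGroup (obj a)]
  [isModule : ∀ a, Module 𝕜 (obj a)]
  map : ∀ {a b : P}, a ≤ b → (obj a →ₗ[𝕜] obj b)
  map_id : ∀ a : P, map (le_refl a) = LinearMap.id
  map_comp : ∀ {a b c : P} (hab : a ≤ b) (hbc : b ≤ c),
      map (le_trans hab hbc) = (map hbc).comp (map hab)

attribute [instance] PersistenceModule.isAddCommGroup PersistenceModule.isModule

namespace PersistenceModule

variable {P : Type u} [Preorder P] {𝕜 : Type v} [Field 𝕜]

/-- The rank invariant `β^{a,b} = dim (Im (M (a ≤ b)))`. -/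
noncomputable def rankInv (M : PersistenceModule P 𝕜) {a b : P} (hab : a ≤ b) : Cardinal :=
  Module.rank 𝕜 (LinearMap.range (M.map hab))

/-- Pointwise finite dimensional persistence module. -/
def PointwiseFiniteDimensional (M : PersistenceModule P 𝕜) : Prop :=
  ∀ a : P, FiniteDimensional 𝕜 (M.obj a)

section Landscape

variable {n : ℕ}

lemma sub_le_add_self {x h : Fin n → ℝ} (hh : 0 ≤ h) : x - h ≤ x + h :=
  le_trans (sub_le_self x hh) (le_add_of_nonneg_right hh)

/-- Generalised landscape function with respect to a size function `ν` on `ℝⁿ`: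
`λ(k, x) = sup { ε ≥ 0 : β^{x-h, x+h} ≥ k for all h ≥ 0 with ν h ≤ ε }`. -/
noncomputable def landscapeBy (ν : (Fin n → ℝ) → ℝ)
    (M : PersistenceModule (Fin n → ℝ) 𝕜) (k : ℕ) (x : Fin n → ℝ) : ℝ≥0∞ :=
  sSup {ε : ℝ≥0∞ | ∀ h : Fin n → ℝ, (hh : 0 ≤ h) → ENNReal.ofReal (ν h) ≤ ε →
    (k : Cardinal) ≤ M.rankInv (sub_le_add_self hh (x := x))}

/-- The uniform persistence `∞`-landscape (the sup norm is the norm on `Fin n → ℝ`). -/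
noncomputable def landscapeInfty (M : PersistenceModule (Fin n → ℝ) 𝕜) :
    ℕ → (Fin n → ℝ) → ℝ≥0∞ :=
  landscapeBy (fun h => ‖h‖) M

/-- The `w`-weighted infinity norm `‖h‖_∞^w = max_i |w_i h_i|`. -/
noncomputable def wnorm (w : Fin n → ℝ) (h : Fin n → ℝ) : ℝ :=
  ‖fun i => w i * h i‖

/-- The `w`-weighted persistence landscape. -/
noncomputable def landscapeW (w : Fin n → ℝ) (M : PersistenceModule (Fin n → ℝ) 𝕜) :
    ℕ → (Fin n → ℝ) → ℝ≥0∞ :=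
  landscapeBy (wnorm w) M

/-- The `p`-norm on `ℝⁿ`, via `PiLp`. -/
noncomputable def pnorm (p : ℝ≥0∞) [Fact (1 ≤ p)] (h : Fin n → ℝ) : ℝ :=
  ‖(WithLp.equiv p (Fin n → ℝ)).symm h‖

/-- The uniform persistence `p`-landscape. -/
noncomputable def landscapeP (p : ℝ≥0∞) [Fact (1 ≤ p)]
    (M : PersistenceModule (Fin n → ℝ) 𝕜) : ℕ → (Fin n → ℝ) → ℝ≥0∞ :=
  landscapeBy (pnorm p) M

end Landscape

section Interleaving

/-- An `(Γ, K)`-interleaving between two persistence modules. -/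
structure Interleaving (M N : PersistenceModule P 𝕜) (Γ K : P → P)
    (hΓ : Monotone Γ) (hΓi : ∀ x, x ≤ Γ x) (hK : Monotone K) (hKi : ∀ x, x ≤ K x) where
  φ : ∀ a : P, M.obj a →ₗ[𝕜] N.obj (Γ a)
  ψ : ∀ a : P, N.obj a →ₗ[𝕜] M.obj (K a)
  φ_nat : ∀ {a b : P} (hab : a ≤ b), (φ b).comp (M.map hab) = (N.map (hΓ hab)).comp (φ a)
  ψ_nat : ∀ {a b : P} (hab : a ≤ b), (ψ b).comp (N.map hab) = (M.map (hK hab)).comp (ψ a)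
  comm₁ : ∀ a : P, (ψ (Γ a)).comp (φ a) = M.map ((hΓi a).trans (hKi (Γ a)))
  comm₂ : ∀ a : P, (φ (K a)).comp (ψ a) = N.map ((hKi a).trans (hΓi (K a)))

variable {n : ℕ}

/-- Interleaving distance with respect to the sublinear projection induced by a size
function `ν`, i.e. `ω_Γ = sup_x ν (Γ x - x)`. -/
noncomputable def interleavingDistBy (ν : (Fin n → ℝ) → ℝ)
    (M N : PersistenceModule (Fin n → ℝ) 𝕜) : ℝ≥0∞ :=
  sInf {ε : ℝ≥0∞ | ∃ (Γ K : (Fin n → ℝ) → (Fin n → ℝ)) (hΓ : Monotone Γ)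
    (hΓi : ∀ x, x ≤ Γ x) (hK : Monotone K) (hKi : ∀ x, x ≤ K x),
    Nonempty (Interleaving M N Γ K hΓ hΓi hK hKi) ∧
    (⨆ x, ENNReal.ofReal (ν (Γ x - x))) ≤ ε ∧ (⨆ x, ENNReal.ofReal (ν (K x - x))) ≤ ε}

/-- The interleaving distance with respect to `ω_Γ = ‖Γ - id‖_∞`. -/
noncomputable def interleavingDist (M N : PersistenceModule (Fin n → ℝ) 𝕜) : ℝ≥0∞ :=
  interleavingDistBy (fun h => ‖h‖) M N

end Interleaving

end PersistenceModule

namespace PersistenceModule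

/-!
The closed ball of radius `ε` for the `w`-weighted infinity norm is the order interval `[-r, r]`
with `r i = ε / |w i|`. Hence a translation of weighted size at most `ε` is dominated by the shift
`x ↦ x + r`, and an interleaving by such translations factors `M (x - (h + r) ≤ x + (h + r))`
through `N (x - h ≤ x + h)`. So the rank of the former is at most that of the latter, while passing
from `h` to `h + r` raises the weighted norm by at most `ε`.
-/

section Rank

universe w₁ w₂

variable {P : Type*} [Preorder P] {𝕜 : Type*} [Field 𝕜] {M N : PersistenceModule P 𝕜}
  {Γ K : P → P} {hΓ : Monotone Γ} {hΓi : ∀ x, x ≤ Γ x} {hK : Monotone K} {hKi : ∀ x, x ≤ K x}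

/-- The interleaving obtained by exchanging the roles of the two modules. -/
def Interleaving.symm (I : Interleaving M N Γ K hΓ hΓi hK hKi) :
    Interleaving N M K Γ hK hKi hΓ hΓi where
  φ := I.ψ
  ψ := I.φ
  φ_nat := I.ψ_nat
  ψ_nat := I.φ_nat
  comm₁ := I.comm₂
  comm₂ := I.comm₁

lemma Interleaving.map_eq_comp (I : Interleaving M N Γ K hΓ hΓi hK hKi) {a b c d : P}
    (hab : Γ a ≤ b) (hbc : b ≤ c) (hcd : K c ≤ d) (had : a ≤ d) :
    M.map had = (M.map hcd ∘ₗ I.ψ c) ∘ₗ N.map hbc ∘ₗ (N.map hab ∘ₗ I.φ a) := by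
  have hac : Γ a ≤ c := hab.trans hbc
  symm
  calc (M.map hcd ∘ₗ I.ψ c) ∘ₗ N.map hbc ∘ₗ (N.map hab ∘ₗ I.φ a)
      = M.map hcd ∘ₗ (I.ψ c ∘ₗ N.map hac) ∘ₗ I.φ a := by
        rw [N.map_comp hab hbc]; rfl
    _ = M.map hcd ∘ₗ M.map (hK hac) ∘ₗ (I.ψ (Γ a) ∘ₗ I.φ a) := by
        rw [I.ψ_nat hac]; rfl
    _ = M.map had := by
        rw [I.comm₁, ← M.map_comp, ← M.map_comp]

lemma Interleaving.lift_rankInv_le {M : PersistenceModule.{_, _, w₁} P 𝕜}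
    {N : PersistenceModule.{_, _, w₂} P 𝕜} (I : Interleaving M N Γ K hΓ hΓi hK hKi) {a b c d : P}
    (hab : Γ a ≤ b) (hbc : b ≤ c) (hcd : K c ≤ d) (had : a ≤ d) :
    Cardinal.lift.{w₂} (M.rankInv had) ≤ Cardinal.lift.{w₁} (N.rankInv hbc) := by
  simp only [rankInv]
  rw [I.map_eq_comp hab hbc hcd had]
  exact (LinearMap.lift_rank_comp_le_right _ _).trans
    (Cardinal.lift_le.2 (LinearMap.rank_comp_le_left _ _))

lemma Interleaving.natCast_le_rankInv (I : Interleaving M N Γ K hΓ hΓi hK hKi) {a b c d : P}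
    (hab : Γ a ≤ b) (hbc : b ≤ c) (hcd : K c ≤ d) (had : a ≤ d) {k : ℕ}
    (hk : (k : Cardinal) ≤ M.rankInv had) : (k : Cardinal) ≤ N.rankInv hbc :=
  Cardinal.nat_le_lift_iff.1 <|
    (Cardinal.nat_le_lift_iff.2 hk).trans (I.lift_rankInv_le hab hbc hcd had)

end Rank

section InterleavingDist

variable {n : ℕ} {𝕜 : Type*} [Field 𝕜] {M N : PersistenceModule (Fin n → ℝ) 𝕜}
  {ν ν' : (Fin n → ℝ) → ℝ} {ε : ℝ≥0∞}

/-- Two modules are `ε`-interleaved with respect to a size function `ν` if they are interleaved by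
two translations whose displacements have size at most `ε`; `interleavingDistBy ν` is the infimum of
all such `ε`. -/
def InterleavedBy (ν : (Fin n → ℝ) → ℝ) (M N : PersistenceModule (Fin n → ℝ) 𝕜)
    (ε : ℝ≥0∞) : Prop :=
  ∃ (Γ K : (Fin n → ℝ) → (Fin n → ℝ)) (hΓ : Monotone Γ) (hΓi : ∀ x, x ≤ Γ x)
    (hK : Monotone K) (hKi : ∀ x, x ≤ K x),
    Nonempty (Interleaving M N Γ K hΓ hΓi hK hKi) ∧
    (⨆ x, ENNReal.ofReal (ν (Γ x - x))) ≤ ε ∧ (⨆ x, ENNReal.ofReal (ν (K x - x))) ≤ ε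

lemma InterleavedBy.symm (h : InterleavedBy ν M N ε) : InterleavedBy ν N M ε :=
  let ⟨Γ, K, hΓ, hΓi, hK, hKi, ⟨I⟩, hΓε, hKε⟩ := h
  ⟨K, Γ, hK, hKi, hΓ, hΓi, ⟨I.symm⟩, hKε, hΓε⟩

lemma interleavedBy_comm : InterleavedBy ν M N ε ↔ InterleavedBy ν N M ε :=
  ⟨InterleavedBy.symm, InterleavedBy.symm⟩

lemma interleavingDistBy_eq_sInf (ν : (Fin n → ℝ) → ℝ) (M N : PersistenceModule (Fin n → ℝ) 𝕜) :
    interleavingDistBy ν M N = sInf {ε | InterleavedBy ν M N ε} :=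
  rfl

lemma interleavingDistBy_comm (ν : (Fin n → ℝ) → ℝ) (M N : PersistenceModule (Fin n → ℝ) 𝕜) :
    interleavingDistBy ν M N = interleavingDistBy ν N M := by
  simp only [interleavingDistBy_eq_sInf, interleavedBy_comm (M := M)]

lemma InterleavedBy.of_le_mul {C : ℝ} (hC : 0 ≤ C) (hν : ∀ h, ν h ≤ C * ν' h)
    (h : InterleavedBy ν' M N ε) : InterleavedBy ν M N (ENNReal.ofReal C * ε) := by
  have displacement_le {Λ : (Fin n → ℝ) → (Fin n → ℝ)}
      (hΛ : (⨆ x, ENNReal.ofReal (ν' (Λ x - x))) ≤ ε) :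
      (⨆ x, ENNReal.ofReal (ν (Λ x - x))) ≤ ENNReal.ofReal C * ε :=
    iSup_le fun x => calc
      ENNReal.ofReal (ν (Λ x - x)) ≤ ENNReal.ofReal (C * ν' (Λ x - x)) :=
        ENNReal.ofReal_le_ofReal (hν _)
      _ = ENNReal.ofReal C * ENNReal.ofReal (ν' (Λ x - x)) := ENNReal.ofReal_mul hC
      _ ≤ ENNReal.ofReal C * ε := by gcongr; exact iSup_le_iff.1 hΛ x
  obtain ⟨Γ, K, hΓ, hΓi, hK, hKi, hI, hΓε, hKε⟩ := h
  exact ⟨Γ, K, hΓ, hΓi, hK, hKi, hI, displacement_le hΓε, displacement_le hKε⟩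

lemma interleavingDistBy_le_mul {C : ℝ} (hC : 0 < C) (hν : ∀ h, ν h ≤ C * ν' h)
    (M N : PersistenceModule (Fin n → ℝ) 𝕜) :
    interleavingDistBy ν M N ≤ ENNReal.ofReal C * interleavingDistBy ν' M N := by
  have hC₀ : ENNReal.ofReal C ≠ 0 := (ENNReal.ofReal_pos.2 hC).ne'
  rw [← ENNReal.div_le_iff' hC₀ ENNReal.ofReal_ne_top, interleavingDistBy_eq_sInf ν']
  refine le_sInf fun ε hε => ?_
  rw [ENNReal.div_le_iff' hC₀ ENNReal.ofReal_ne_top]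
  exact sInf_le (InterleavedBy.of_le_mul hC.le hν hε)

end InterleavingDist

section WeightedNorm

variable {n : ℕ} {w h : Fin n → ℝ} {ε : ℝ}

lemma wnorm_le_norm_mul_norm (w h : Fin n → ℝ) : wnorm w h ≤ ‖w‖ * ‖h‖ :=
  norm_mul_le w h

lemma wnorm_add_le (w h h' : Fin n → ℝ) : wnorm w (h + h') ≤ wnorm w h + wnorm w h' := by
  change ‖w * (h + h')‖ ≤ ‖w * h‖ + ‖w * h'‖
  simpa only [mul_add] using norm_add_le (w * h) (w * h')

/-- The largest vector of the closed `w`-weighted ball of radius `ε`, for `w` without zero entries.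
A zero entry of `w` gives the junk value `0`, although the ball is then unbounded in that
direction. -/
noncomputable def weightedCorner (w : Fin n → ℝ) (ε : ℝ) : Fin n → ℝ :=
  fun i => ε / |w i|

lemma weightedCorner_nonneg (w : Fin n → ℝ) (hε : 0 ≤ ε) : 0 ≤ weightedCorner w ε :=
  fun i => div_nonneg hε (abs_nonneg (w i))

lemma wnorm_le_iff_abs_le_weightedCorner (hw : ∀ i, w i ≠ 0) (hε : 0 ≤ ε) :
    wnorm w h ≤ ε ↔ |h| ≤ weightedCorner w ε := by
  rw [wnorm, pi_norm_le_iff_of_nonneg hε, Pi.le_def]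
  refine forall_congr' fun i => ?_
  rw [Real.norm_eq_abs, abs_mul, weightedCorner, le_div_iff₀' (abs_pos.2 (hw i)), Pi.abs_apply]

lemma wnorm_weightedCorner_le (hw : ∀ i, w i ≠ 0) (hε : 0 ≤ ε) :
    wnorm w (weightedCorner w ε) ≤ ε :=
  (wnorm_le_iff_abs_le_weightedCorner hw hε).2 (abs_of_nonneg (weightedCorner_nonneg w hε)).le

lemma le_add_weightedCorner_of_iSup_wnorm_le (hw : ∀ i, w i ≠ 0) {ε : ℝ≥0}
    {Γ : (Fin n → ℝ) → (Fin n → ℝ)} (hΓ : (⨆ x, ENNReal.ofReal (wnorm w (Γ x - x))) ≤ ε)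
    (x : Fin n → ℝ) : Γ x ≤ x + weightedCorner w ε := by
  have hdisp : wnorm w (Γ x - x) ≤ ε :=
    Real.toNNReal_le_iff_le_coe.1 (ENNReal.coe_le_coe.1 (iSup_le_iff.1 hΓ x))
  exact sub_le_iff_le_add'.1 <|
    (le_abs_self _).trans ((wnorm_le_iff_abs_le_weightedCorner hw ε.coe_nonneg).1 hdisp)

end WeightedNorm

section Stability

variable {n : ℕ} {𝕜 : Type*} [Field 𝕜] {M N : PersistenceModule (Fin n → ℝ) 𝕜}

lemma Interleaving.landscapeBy_le_add {Γ K : (Fin n → ℝ) → (Fin n → ℝ)}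
    {hΓ : Monotone Γ} {hΓi : ∀ x, x ≤ Γ x} {hK : Monotone K} {hKi : ∀ x, x ≤ K x}
    (I : Interleaving M N Γ K hΓ hΓi hK hKi) {r : Fin n → ℝ} (hr : 0 ≤ r)
    (hΓr : ∀ x, Γ x ≤ x + r) (hKr : ∀ x, K x ≤ x + r) {ν : (Fin n → ℝ) → ℝ} {ε : ℝ≥0}
    (hν : ∀ h, 0 ≤ h → ν (h + r) ≤ ν h + ε) (k : ℕ) (x : Fin n → ℝ) :
    landscapeBy ν M k x ≤ landscapeBy ν N k x + ε := by
  refine sSup_le fun t ht => ?_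
  obtain htε | hεt := le_total t ε
  · exact htε.trans le_add_self
  rw [← tsub_le_iff_right]
  refine le_sSup fun h hh hht => ?_
  have hhr : 0 ≤ h + r := add_nonneg hh hr
  have hsize : ENNReal.ofReal (ν (h + r)) ≤ t := calc
    ENNReal.ofReal (ν (h + r)) ≤ ENNReal.ofReal (ν h + ε) := ENNReal.ofReal_le_ofReal (hν h hh)
    _ ≤ ENNReal.ofReal (ν h) + ENNReal.ofReal ε := ENNReal.ofReal_add_le
    _ = ENNReal.ofReal (ν h) + ε := by rw [ENNReal.ofReal_coe_nnreal]
    _ ≤ (t - ε) + ε := by gcongr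
    _ = t := tsub_add_cancel_of_le hεt
  have hlower : Γ (x - (h + r)) ≤ x - h := (hΓr _).trans_eq (by abel)
  have hupper : K (x + h) ≤ x + (h + r) := (hKr _).trans_eq (by abel)
  exact I.natCast_le_rankInv hlower (sub_le_add_self hh) hupper (sub_le_add_self hhr)
    (ht (h + r) hhr hsize)

lemma InterleavedBy.landscapeW_le_add {w : Fin n → ℝ} (hw : ∀ i, w i ≠ 0) {ε : ℝ≥0∞}
    (h : InterleavedBy (wnorm w) M N ε) (k : ℕ) (x : Fin n → ℝ) :
    landscapeW w M k x ≤ landscapeW w N k x + ε := by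
  induction ε using ENNReal.recTopCoe with
  | top => simp only [add_top, le_top]
  | coe ε =>
    obtain ⟨Γ, K, hΓ, hΓi, hK, hKi, ⟨I⟩, hΓε, hKε⟩ := h
    have hcorner : ∀ h, 0 ≤ h → wnorm w (h + weightedCorner w ε) ≤ wnorm w h + ε := fun h _ =>
      (wnorm_add_le w h _).trans (by gcongr; exact wnorm_weightedCorner_le hw ε.coe_nonneg)
    exact I.landscapeBy_le_add (weightedCorner_nonneg w ε.coe_nonneg)
      (le_add_weightedCorner_of_iSup_wnorm_le hw hΓε)
      (le_add_weightedCorner_of_iSup_wnorm_le hw hKε) hcorner k x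

lemma landscapeW_le_add_interleavingDistBy {w : Fin n → ℝ} (hw : ∀ i, w i ≠ 0)
    (M N : PersistenceModule (Fin n → ℝ) 𝕜) (k : ℕ) (x : Fin n → ℝ) :
    landscapeW w M k x ≤ landscapeW w N k x + interleavingDistBy (wnorm w) M N := by
  rw [← tsub_le_iff_left, interleavingDistBy_eq_sInf]
  exact le_sInf fun ε hε => tsub_le_iff_left.2 (InterleavedBy.landscapeW_le_add hw hε k x)

theorem landscapeW_stability_general (M N : PersistenceModule (Fin n → ℝ) 𝕜) {w : Fin n → ℝ}
    (hw : ∀ i, w i ≠ 0) (hw₀ : w ≠ 0) :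
    (∀ (k : ℕ) (x : Fin n → ℝ),
      landscapeW w M k x ≤ landscapeW w N k x + interleavingDistBy (wnorm w) M N ∧
      landscapeW w N k x ≤ landscapeW w M k x + interleavingDistBy (wnorm w) M N) ∧
    interleavingDistBy (wnorm w) M N ≤ ENNReal.ofReal ‖w‖ * interleavingDist M N := by
  refine ⟨fun k x => ⟨landscapeW_le_add_interleavingDistBy hw M N k x, ?_⟩,
    interleavingDistBy_le_mul (norm_pos_iff.2 hw₀) (wnorm_le_norm_mul_norm w) M N⟩
  rw [interleavingDistBy_comm]
  exact landscapeW_le_add_interleavingDistBy hw N M k x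

end Stability

/-- Weighted landscape stability: for `n`-parameter persistence
modules `M, N` and a weighting vector `w` (with `w_i > 0` and `‖w‖_∞ = 1`),
`sup_{k,x} |λ_w(M)(k,x) − λ_w(N)(k,x)| ≤ d^{ω^w}(M,N) ≤ d^ω(M,N)`, where `ω` and
`ω^w` are the sublinear projections `ω_Γ = ‖Γ − id‖_∞` and `ω^w_Γ = ‖Γ − id‖_∞^w`
(the first bound is stated pointwise in `k` and `x` as the pair of inequalities
expressing the bound on the absolute difference in `ℝ≥0∞`, which is equivalent to
the bound on the supremum). -/
theorem landscapeW_stability {n : ℕ} {𝕜 : Type v} [Field 𝕜]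
    (M N : PersistenceModule (Fin n → ℝ) 𝕜)
    (w : Fin n → ℝ) (hw : ∀ i, 0 < w i) (hw1 : ‖w‖ = 1) :
    (∀ (k : ℕ) (x : Fin n → ℝ),
      landscapeW w M k x ≤ landscapeW w N k x + interleavingDistBy (wnorm w) M N ∧
      landscapeW w N k x ≤ landscapeW w M k x + interleavingDistBy (wnorm w) M N) ∧
    interleavingDistBy (wnorm w) M N ≤ interleavingDist M N := by
  have hw₀ : w ≠ 0 := norm_ne_zero_iff.1 (hw1 ▸ one_ne_zero)
  simpa only [hw1, ENNReal.ofReal_one, one_mul] using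
    landscapeW_stability_general M N (fun i => (hw i).ne') hw₀

end PersistenceModule
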